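/- arXiv:1202.2891 — 4 statements merged into one kernel-verified Lean document; each statement's English description precedes it below -/
import Mathlib

section
/- Let M be a free ℤ-module of finite rank g, let φ : M → M be a ℤ-linear automorphism, and let χ ∈ M be such that the ℤ-span of the orbit {φ^n χ : n ∈ ℤ} is all of M. Then the g elements χ, φχ, φ²χ, …, φ^{g−1}χ form a ℤ-basis of M. -/
/-!
By Cayley–Hamilton, the span `N` of the first `g` iterates of `χ` is stable under `φ`. The
endomorphism that `φ` induces on the finite module `M ⧸ N` is surjective, hence injective, so `N`
is also stable under `φ⁻¹` and contains the whole orbit of `χ`. Finally, `g` elements spanning a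
free module of rank `g` are linearly independent.
-/

open Module Polynomial Submodule
open scoped Pointwise

section Ring

variable {R M : Type*} [Ring R] [OrzechProperty R] [AddCommGroup M] [Module R M] [Module.Finite R M]

theorem apply_mem_iff_of_mem_invtSubmodule {f : End R M} (hf : Function.Surjective f)
    {N : Submodule R M} (hN : N ∈ f.invtSubmodule) {x : M} : f x ∈ N ↔ x ∈ N := by
  have hle : N ≤ N.comap f := hN
  refine ⟨fun hx => ?_, fun hx => hle hx⟩
  have hsurj : Function.Surjective (N.mapQ N f hle) := by
    rw [← LinearMap.range_eq_top, range_mapQ, LinearMap.range_eq_top.2 hf, Submodule.map_top,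
      range_mkQ]
  have hinj := OrzechProperty.injective_of_surjective_endomorphism _ hsurj
  rw [← Quotient.mk_eq_zero] at hx ⊢
  exact (map_eq_zero_iff _ hinj).1 hx

theorem zpow_apply_mem_iff_of_mem_invtSubmodule {φ : M ≃ₗ[R] M} {N : Submodule R M}
    (hN : N ∈ End.invtSubmodule φ.toLinearMap) (n : ℤ) {x : M} : (φ ^ n) x ∈ N ↔ x ∈ N := by
  have hφ : φ ∈ MulAction.stabilizer (M ≃ₗ[R] M) (N : Set M) :=
    MulAction.mem_stabilizer_set.2 fun _ => apply_mem_iff_of_mem_invtSubmodule φ.surjective hN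
  exact MulAction.mem_stabilizer_set.1 (zpow_mem hφ n) x

end Ring

section CommRing

variable {R M : Type*} [CommRing R] [AddCommGroup M] [Module R M]

theorem aeval_apply_mem_span_range_pow_apply {f : End R M} {x : M} {p : R[X]} (hp : p.Monic)
    (hx : aeval f p x = 0) (q : R[X]) :
    aeval f q x ∈ span R (Set.range fun j : Fin p.natDegree => (f ^ (j : ℕ)) x) := by
  have hmod : aeval f q x = aeval f (q %ₘ p) x := by
    conv_lhs => rw [← modByMonic_add_div q p, mul_comm]
    rw [map_add, map_mul, LinearMap.add_apply, End.mul_apply, hx, map_zero, add_zero]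
  rw [hmod, ← sum_modByMonic_coeff hp degree_le_natDegree, map_sum, LinearMap.sum_apply]
  refine sum_mem fun j _ => ?_
  rw [aeval_monomial, End.mul_apply, algebraMap_end_apply]
  exact smul_mem _ _ (subset_span ⟨j, rfl⟩)

theorem span_range_pow_apply_mem_invtSubmodule {f : End R M} {x : M} {p : R[X]} (hp : p.Monic)
    (hx : aeval f p x = 0) :
    span R (Set.range fun j : Fin p.natDegree => (f ^ (j : ℕ)) x) ∈ f.invtSubmodule := by
  rw [End.mem_invtSubmodule, span_le]
  rintro _ ⟨j, rfl⟩
  have hmem := aeval_apply_mem_span_range_pow_apply hp hx (X ^ ((j : ℕ) + 1))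
  rwa [aeval_X_pow, pow_succ', End.mul_apply] at hmem

theorem span_range_zpow_apply_eq_span_range_pow_apply [Module.Finite R M] {φ : M ≃ₗ[R] M}
    {x : M} {p : R[X]} (hp : p.Monic) (hx : aeval φ.toLinearMap p x = 0) :
    span R (Set.range fun n : ℤ => (φ ^ n) x) =
      span R (Set.range fun j : Fin p.natDegree => (φ ^ (j : ℕ)) x) := by
  have hinv := span_range_pow_apply_mem_invtSubmodule hp hx
  have hmem := aeval_apply_mem_span_range_pow_apply hp hx 1
  simp only [map_one, End.one_apply, End.pow_apply, LinearEquiv.coe_coe,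
    ← LinearEquiv.pow_apply] at hinv hmem
  apply le_antisymm
  · rw [span_le]
    rintro _ ⟨n, rfl⟩
    exact (zpow_apply_mem_iff_of_mem_invtSubmodule hinv n).2 hmem
  · exact span_mono (Set.range_subset_iff.2 fun j => ⟨j, by simp only [zpow_natCast]⟩)

theorem orbit_generator_gives_basis_general [Free R M] [Module.Finite R M] (φ : M ≃ₗ[R] M) (χ : M)
    (hχ : span R (Set.range fun n : ℤ => (φ ^ n) χ) = ⊤) :
    LinearIndependent R (fun j : Fin (finrank R M) => (φ ^ (j : ℕ)) χ) ∧
      span R (Set.range fun j : Fin (finrank R M) => (φ ^ (j : ℕ)) χ) = ⊤ := by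
  nontriviality R
  have hspan : span R (Set.range fun j : Fin (finrank R M) => (φ ^ (j : ℕ)) χ) = ⊤ := by
    have hmonic := LinearMap.charpoly_monic φ.toLinearMap
    have hroot : aeval φ.toLinearMap φ.toLinearMap.charpoly χ = 0 := by
      rw [LinearMap.aeval_self_charpoly, LinearMap.zero_apply]
    rw [← hχ, span_range_zpow_apply_eq_span_range_pow_apply hmonic hroot,
      LinearMap.charpoly_natDegree]
  exact ⟨linearIndependent_of_top_le_span_of_card_eq_finrank hspan.ge (Fintype.card_fin _), hspan⟩

end CommRing

/-- If `M` is a free `ℤ`-module of finite rank `g`, `φ : M ≃ₗ[ℤ] M` is a `ℤ`-linear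
automorphism, and `χ ∈ M` is such that the `ℤ`-span of the orbit `{φ^n χ : n ∈ ℤ}` is all
of `M`, then `χ, φ χ, …, φ^(g-1) χ` form a `ℤ`-basis of `M`. -/
theorem orbit_generator_gives_basis
    (M : Type*) [AddCommGroup M] [Module ℤ M] [Module.Free ℤ M] [Module.Finite ℤ M]
    (φ : M ≃ₗ[ℤ] M) (χ : M)
    (hχ : Submodule.span ℤ (Set.range fun n : ℤ => (φ ^ n) χ) = ⊤) :
    LinearIndependent ℤ (fun j : Fin (Module.finrank ℤ M) => (φ ^ (j : ℕ)) χ) ∧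
      Submodule.span ℤ
        (Set.range fun j : Fin (Module.finrank ℤ M) => (φ ^ (j : ℕ)) χ) = ⊤ :=
  orbit_generator_gives_basis_general φ χ hχ
end

section
/- Let k be a finite field with q elements and K an algebraic closure of k. Let M be a free ℤ-module of finite rank g, φ : M → M a ℤ-linear automorphism, and suppose (M, φ) is principal with generator χ. Let f ∈ ℤ[x] be the characteristic polynomial of φ. Then the evaluation map e ↦ e(χ) is a group isomorphism from the group G(M, φ) of q-Frobenius characters of (M, φ) onto the group {ω ∈ Kˣ : ω^{f(q)} = 1} of f(q)-th roots of unity in K, where f(q) denotes f evaluated at q. -/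
/-- The group of `q`-Frobenius characters of `(M, φ)`: group homomorphisms `e` from the
additive group `M` to the multiplicative group `Kˣ` satisfying `e (φ m) = e m ^ q`,
as a subgroup of the group `M → Kˣ` under pointwise multiplication. -/
def frobeniusCharGroup {M : Type*} [AddCommGroup M] [Module ℤ M]
    (K : Type*) [Field K] (q : ℕ) (φ : M ≃ₗ[ℤ] M) : Subgroup (M → Kˣ) where
  carrier := {e | (∀ a b, e (a + b) = e a * e b) ∧ ∀ m, e (φ m) = e m ^ q}
  mul_mem' := by
    rintro a b ⟨ha1, ha2⟩ ⟨hb1, hb2⟩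
    refine ⟨fun x y => ?_, fun m => ?_⟩
    · simp only [Pi.mul_apply, ha1 x y, hb1 x y]
      exact mul_mul_mul_comm _ _ _ _
    · simp only [Pi.mul_apply, ha2 m, hb2 m, mul_pow]
  one_mem' := ⟨fun _ _ => (one_mul 1).symm, fun _ => (one_pow q).symm⟩
  inv_mem' := by
    rintro a ⟨ha1, ha2⟩
    refine ⟨fun x y => ?_, fun m => ?_⟩
    · simp only [Pi.inv_apply, ha1 x y, mul_inv]
    · simp only [Pi.inv_apply, ha2 m, inv_pow]

/-- The group `{ω ∈ Kˣ : ω ^ n = 1}` of `n`-th roots of unity in `K`, for `n : ℤ`. -/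
def zpowOneSubgroup (K : Type*) [Field K] (n : ℤ) : Subgroup Kˣ where
  carrier := {ω | ω ^ n = 1}
  mul_mem' := by
    intro a b ha hb
    simp only [Set.mem_setOf_eq] at *
    rw [mul_zpow, ha, hb, one_mul]
  one_mem' := one_zpow n
  inv_mem' := by
    intro a ha
    simp only [Set.mem_setOf_eq] at *
    rw [inv_zpow, ha, inv_one]

/-!
Because `φ⁻¹` is integral over `ℤ`, the powers `φ⁻ⁿ` are polynomials in `φ`, so `p ↦ p(φ) χ` maps
`ℤ[X]` onto `M`. By Cayley–Hamilton it factors through `ℤ[X] / (f)`, which is free of the same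
finite rank as `M`, and a surjection between such modules is an isomorphism. Written additively, a
`q`-Frobenius character is a homomorphism `E : M → Kˣ` that is an eigenvector of eigenvalue `q` for
`E ↦ E ∘ φ`; it sends `p(φ) χ` to `p(q) • E χ`. Hence `E` is determined by `E χ`, and the only
constraint on `E χ` is that `f(q)` annihilates it.
-/

section Units

open Polynomial

variable {R A : Type*} [CommRing R] [Ring A] [Algebra R A] {u : Aˣ}

theorem coe_inv_mem_adjoin_of_isIntegral_inv (hu : IsIntegral R (↑u⁻¹ : A)) :
    (↑u⁻¹ : A) ∈ Algebra.adjoin R {(u : A)} := by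
  obtain ⟨p, hp, hroot⟩ := hu
  have hpow : (↑u⁻¹ : A) ^ p.natDegree =
      -∑ i ∈ Finset.range p.natDegree, p.coeff i • (↑u⁻¹ : A) ^ i := by
    rw [← aeval_def, hp.as_sum] at hroot
    exact eq_neg_of_add_eq_zero_left (by simpa [Algebra.smul_def] using hroot)
  have hshift {i : ℕ} (hi : i < p.natDegree) :
      u ^ p.natDegree * u⁻¹ * u⁻¹ ^ i = u ^ (p.natDegree - (i + 1)) := by
    rw [pow_sub u hi, mul_assoc, ← pow_succ', inv_pow]
  have hinv : (↑u⁻¹ : A) =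
      -∑ i ∈ Finset.range p.natDegree, p.coeff i • (u : A) ^ (p.natDegree - (i + 1)) :=
    calc (↑u⁻¹ : A) = ↑(u ^ p.natDegree * u⁻¹) * (↑u⁻¹ : A) ^ p.natDegree := by
          norm_cast
          group
      _ = -∑ i ∈ Finset.range p.natDegree,
            p.coeff i • (↑(u ^ p.natDegree * u⁻¹) * (↑u⁻¹ : A) ^ i) := by
          simp only [hpow, mul_neg, Finset.mul_sum, mul_smul_comm]
      _ = -∑ i ∈ Finset.range p.natDegree, p.coeff i • (u : A) ^ (p.natDegree - (i + 1)) := by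
          refine congrArg Neg.neg (Finset.sum_congr rfl fun i hi ↦ ?_)
          exact_mod_cast congrArg (fun v : Aˣ ↦ p.coeff i • (v : A))
            (hshift (Finset.mem_range.mp hi))
  rw [hinv]
  exact neg_mem (sum_mem fun i _ ↦ Subalgebra.smul_mem _
    (pow_mem (Algebra.self_mem_adjoin_singleton R _) _) _)

theorem coe_zpow_mem_adjoin_of_isIntegral_inv (hu : IsIntegral R (↑u⁻¹ : A)) (n : ℤ) :
    (↑(u ^ n) : A) ∈ Algebra.adjoin R {(u : A)} := by
  obtain ⟨n, rfl | rfl⟩ := n.eq_nat_or_neg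
  · simpa using pow_mem (Algebra.self_mem_adjoin_singleton R (u : A)) n
  · simpa using pow_mem (coe_inv_mem_adjoin_of_isIntegral_inv hu) n

end Units

section LinearAlgebra

open Polynomial Module.End Submodule

variable {R M : Type*} [CommRing R] [AddCommGroup M] [Module R M]

theorem exists_aeval_eq_zpow [Module.Finite R M] (φ : M ≃ₗ[R] M) (n : ℤ) :
    ∃ p : R[X], aeval φ.toLinearMap p = (φ ^ n).toLinearMap := by
  let u : LinearMap.GeneralLinearGroup R M := .ofLinearEquiv φ
  have hzpow : (u ^ n).toLinearEquiv = φ ^ n :=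
    map_zpow (LinearMap.GeneralLinearGroup.generalLinearEquiv R M) u n
  have hmem := coe_zpow_mem_adjoin_of_isIntegral_inv
    (Algebra.IsIntegral.isIntegral (R := R) (↑u⁻¹ : Module.End R M)) n
  rw [Algebra.adjoin_singleton_eq_range_aeval] at hmem
  rw [← hzpow]
  exact hmem

/-- The map `p ↦ p(φ) χ`, whose range is the cyclic `R[X]`-submodule generated by `χ` when `X` acts
on `M` as `φ`. -/
noncomputable def polynomialOrbitMap (φ : Module.End R M) (χ : M) : R[X] →ₗ[R] M :=
  LinearMap.applyₗ χ ∘ₗ (aeval φ).toLinearMap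

theorem polynomialOrbitMap_apply (φ : Module.End R M) (χ : M) (p : R[X]) :
    polynomialOrbitMap φ χ p = aeval φ p χ :=
  rfl

theorem polynomialOrbitMap_surjective_of_span_zpow [Module.Finite R M] {φ : M ≃ₗ[R] M} {χ : M}
    (hχ : span R (Set.range fun n : ℤ ↦ (φ ^ n) χ) = ⊤) :
    Function.Surjective (polynomialOrbitMap φ.toLinearMap χ) := by
  rw [← LinearMap.range_eq_top, eq_top_iff, ← hχ, span_le]
  rintro _ ⟨n, rfl⟩
  obtain ⟨p, hp⟩ := exists_aeval_eq_zpow φ n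
  exact ⟨p, LinearMap.congr_fun hp χ⟩

theorem polynomialOrbitMap_eq_zero_iff_charpoly_dvd [Module.Free R M] [Module.Finite R M]
    {φ : Module.End R M} {χ : M} (hχ : Function.Surjective (polynomialOrbitMap φ χ)) {p : R[X]} :
    polynomialOrbitMap φ χ p = 0 ↔ φ.charpoly ∣ p := by
  have hmonic := φ.charpoly_monic
  have h_mul (q : R[X]) : polynomialOrbitMap φ χ (φ.charpoly * q) = 0 := by
    simp [polynomialOrbitMap_apply, φ.aeval_self_charpoly]
  refine ⟨fun hp ↦ ?_, fun ⟨q, hq⟩ ↦ hq ▸ h_mul q⟩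
  nontriviality R
  let T : AdjoinRoot φ.charpoly →ₗ[R] M :=
    polynomialOrbitMap φ χ ∘ₗ AdjoinRoot.modByMonicHom hmonic
  have hT (q : R[X]) : T (AdjoinRoot.mk φ.charpoly q) = polynomialOrbitMap φ χ q := by
    conv_rhs => rw [← modByMonic_add_div q φ.charpoly, map_add, h_mul, add_zero]
    simp [T]
  have hsurj : Function.Surjective T := fun m ↦ (hχ m).imp' _ fun q hq ↦ (hT q).trans hq
  have hrank : Module.finrank R (AdjoinRoot φ.charpoly) = Module.finrank R M := by
    rw [(AdjoinRoot.powerBasis' hmonic).finrank, AdjoinRoot.powerBasis'_dim, φ.charpoly_natDegree]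
  have := hmonic.finite_adjoinRoot
  have := hmonic.free_adjoinRoot
  have hinj := (OrzechProperty.bijective_of_surjective_of_finrank_le T hsurj hrank.le).injective
  rw [← AdjoinRoot.mk_eq_zero]
  exact hinj (by rw [hT, hp, map_zero])

variable {A : Type*} [AddCommGroup A] [Module R A] {φ : Module.End R M} {r : R}

theorem mem_eigenspace_lcomp_iff {E : M →ₗ[R] A} :
    E ∈ eigenspace (LinearMap.lcomp R A φ) r ↔ ∀ m, E (φ m) = r • E m :=
  mem_eigenspace_iff.trans LinearMap.ext_iff

theorem apply_aeval_of_mem_eigenspace_lcomp {E : M →ₗ[R] A}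
    (hE : E ∈ eigenspace (LinearMap.lcomp R A φ) r) (p : R[X]) (m : M) :
    E (aeval φ p m) = p.eval r • E m := by
  induction p using Polynomial.induction_on generalizing m with
  | C a => simp [Module.algebraMap_end_apply]
  | add p q hp hq => simp [hp, hq, add_smul]
  | monomial n a ih =>
    rw [pow_succ, ← mul_assoc, map_mul, aeval_X, Module.End.mul_apply, ih,
      mem_eigenspace_lcomp_iff.mp hE, smul_smul, eval_mul_X]

variable [Module.Free R M] [Module.Finite R M]

theorem exists_mem_eigenspace_lcomp_apply_eq {χ : M}
    (hχ : Function.Surjective (polynomialOrbitMap φ χ)) {a : A} (ha : φ.charpoly.eval r • a = 0) :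
    ∃ E ∈ eigenspace (LinearMap.lcomp R A φ) r, E χ = a := by
  set T := polynomialOrbitMap φ χ with hT
  let evalSMul : R[X] →ₗ[R] A := LinearMap.toSpanSingleton R A a ∘ₗ leval r
  have hker : T.ker ≤ evalSMul.ker := by
    intro p hp
    obtain ⟨c, rfl⟩ := (polynomialOrbitMap_eq_zero_iff_charpoly_dvd hχ).mp hp
    simp [evalSMul, mul_comm, mul_smul, ha]
  let E : M →ₗ[R] A := T.ker.liftQ evalSMul hker ∘ₗ (T.quotKerEquivOfSurjective hχ).symm.toLinearMap
  have hE (p : R[X]) : E (T p) = p.eval r • a := by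
    have : (T.quotKerEquivOfSurjective hχ).symm (T p) = Submodule.Quotient.mk p :=
      (LinearEquiv.symm_apply_eq _).mpr rfl
    simp [E, this, evalSMul]
  have hEχ : E χ = a := by simpa [hT, polynomialOrbitMap_apply] using hE 1
  refine ⟨E, mem_eigenspace_lcomp_iff.mpr fun m ↦ ?_, hEχ⟩
  obtain ⟨p, rfl⟩ := hχ m
  have hX : φ (T p) = T (X * p) := by simp [hT, polynomialOrbitMap_apply]
  rw [hX, hE, hE, eval_mul, eval_X, mul_smul]

variable (A φ r) in
/-- Evaluation at `χ` of the linear maps `E : M → A` with `E ∘ φ = r • E`. These are encoded as the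
`r`-eigenspace of precomposition with `φ`; by Cayley–Hamilton their values are killed by `f(r)`,
where `f` is the characteristic polynomial of `φ`. -/
noncomputable def eigenspaceLcompEval (χ : M) :
    eigenspace (LinearMap.lcomp R A φ) r →ₗ[R] torsionBy R A (φ.charpoly.eval r) :=
  (LinearMap.applyₗ χ ∘ₗ (eigenspace (LinearMap.lcomp R A φ) r).subtype).codRestrict _ fun E ↦ by
    simp [← apply_aeval_of_mem_eigenspace_lcomp E.2, φ.aeval_self_charpoly]

variable (A r) in
theorem eigenspaceLcompEval_bijective {χ : M}
    (hχ : Function.Surjective (polynomialOrbitMap φ χ)) :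
    Function.Bijective (eigenspaceLcompEval A φ r χ) := by
  constructor
  · refine (injective_iff_map_eq_zero _).mpr fun E hE ↦ Subtype.ext <| LinearMap.ext fun m ↦ ?_
    have hEχ : E.1 χ = 0 := congrArg Subtype.val hE
    obtain ⟨p, rfl⟩ := hχ m
    rw [polynomialOrbitMap_apply, apply_aeval_of_mem_eigenspace_lcomp E.2, hEχ, smul_zero]
    rfl
  · rintro ⟨a, ha⟩
    obtain ⟨E, hE, hEχ⟩ := exists_mem_eigenspace_lcomp_apply_eq hχ ((mem_torsionBy_iff _ _).mp ha)
    exact ⟨⟨E, hE⟩, Subtype.ext hEχ⟩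

end LinearAlgebra

/-- The group of `q`-Frobenius characters of `(M, φ)`, written additively, as the group of
`ℤ`-linear maps `E : M → Kˣ` with `E ∘ φ = q • E`. -/
def frobeniusCharGroupAddEquiv {M : Type*} [AddCommGroup M] [Module ℤ M]
    (K : Type*) [Field K] (q : ℕ) (φ : M ≃ₗ[ℤ] M) :
    Additive (frobeniusCharGroup K q φ) ≃+
      Module.End.eigenspace (LinearMap.lcomp ℤ (Additive Kˣ) φ.toLinearMap) (q : ℤ) where
  toFun e :=
    let E : M →+ Additive Kˣ := .mk' (fun m ↦ .ofMul (e.toMul.1 m)) e.toMul.2.1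
    ⟨{ E with map_smul' := map_intCast_smul E ℤ ℤ }, mem_eigenspace_lcomp_iff.mpr fun m ↦
      (congrArg Additive.ofMul (e.toMul.2.2 m)).trans (natCast_zsmul _ q).symm⟩
  invFun E := .ofMul ⟨fun m ↦ (E.1 m).toMul, map_add E.1, fun m ↦
    congrArg Additive.toMul ((mem_eigenspace_lcomp_iff.mp E.2 m).trans (natCast_zsmul _ q))⟩
  left_inv _ := rfl
  right_inv _ := rfl
  map_add' _ _ := rfl

/-- The group of `n`-th roots of unity in `K`, written additively, as the `n`-torsion of `Kˣ`. -/
def zpowOneSubgroupAddEquiv (K : Type*) [Field K] (n : ℤ) :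
    Additive (zpowOneSubgroup K n) ≃+ Submodule.torsionBy ℤ (Additive Kˣ) n where
  toFun ω := ⟨.ofMul ω.toMul.1, ω.toMul.2⟩
  invFun a := .ofMul ⟨a.1.toMul, a.2⟩
  left_inv _ := rfl
  right_inv _ := rfl
  map_add' _ _ := rfl

theorem frobeniusCharGroup_equiv_rootsOfUnity_general
    (K : Type*) [Field K] (q : ℕ)
    (M : Type*) [AddCommGroup M] [Module ℤ M] [Module.Free ℤ M] [Module.Finite ℤ M]
    (φ : M ≃ₗ[ℤ] M) (χ : M)
    (hχ : Submodule.span ℤ (Set.range fun n : ℤ ↦ (φ ^ n) χ) = ⊤) :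
    ∃ ψ : frobeniusCharGroup K q φ ≃* zpowOneSubgroup K (φ.toLinearMap.charpoly.eval (q : ℤ)),
      ∀ e : frobeniusCharGroup K q φ, (ψ e : Kˣ) = (e : M → Kˣ) χ := by
  have hsurj := polynomialOrbitMap_surjective_of_span_zpow hχ
  let evalχ := LinearEquiv.ofBijective _ (eigenspaceLcompEval_bijective (Additive Kˣ) (q : ℤ) hsurj)
  let ψ := (frobeniusCharGroupAddEquiv K q φ).trans
    (evalχ.toAddEquiv.trans (zpowOneSubgroupAddEquiv K _).symm)
  exact ⟨MulEquiv.toAdditive.symm ψ, fun _ ↦ rfl⟩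

/-- Let `k` be a finite field with `q` elements and `K` an algebraic closure of `k`.
Let `M` be a free `ℤ`-module of finite rank, `φ` a `ℤ`-linear automorphism of `M`,
principal with generator `χ`, and let `f` be the characteristic polynomial of `φ`.
Then evaluation at `χ` is a group isomorphism from the group of `q`-Frobenius characters
of `(M, φ)` onto the group of `f(q)`-th roots of unity in `K`. -/
theorem frobeniusCharGroup_equiv_rootsOfUnity
    (k : Type*) [Field k] [Fintype k] (K : Type*) [Field K] [Algebra k K] [IsAlgClosure k K]
    (q : ℕ) (hq : Fintype.card k = q)
    (M : Type*) [AddCommGroup M] [Module ℤ M] [Module.Free ℤ M] [Module.Finite ℤ M]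
    (φ : M ≃ₗ[ℤ] M) (χ : M)
    (hχ : Submodule.span ℤ (Set.range fun n : ℤ => (φ ^ n) χ) = ⊤)
    (f : Polynomial ℤ) (hf : f = LinearMap.charpoly φ.toLinearMap) :
    ∃ ψ : frobeniusCharGroup K q φ ≃* zpowOneSubgroup K (f.eval (q : ℤ)),
      ∀ e : frobeniusCharGroup K q φ, (ψ e : Kˣ) = (e : M → Kˣ) χ := by
  subst hf
  exact frobeniusCharGroup_equiv_rootsOfUnity_general K q M φ χ hχ
end

section
/- Let A : ℤ³ → ℤ³ be the ℤ-linear map given by the symmetric matrix with rows (−4, 2, 2), (2, −4, 2), (2, 2, −4). Let S = {(a, b, c) ∈ ℤ³ : a + b + c = 0}. Then the image of A is contained in S, and the quotient group S / A(ℤ³) is isomorphic to ℤ/6ℤ × ℤ/2ℤ. -/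
/-- The submodule `S = {(a, b, c) ∈ ℤ³ : a + b + c = 0}`. -/
def sumZeroSubmodule3 : Submodule ℤ (Fin 3 → ℤ) where
  carrier := {v | v 0 + v 1 + v 2 = 0}
  add_mem' := by
    intro a b ha hb
    simp only [Set.mem_setOf_eq, Pi.add_apply] at *
    omega
  zero_mem' := by simp
  smul_mem' := by
    intro c v hv
    simp only [Set.mem_setOf_eq, Pi.smul_apply, smul_eq_mul] at *
    rw [← mul_add, ← mul_add, hv, mul_zero]

/-!
The intersection matrix is `-2` times the Laplacian of the triangle. More generally, `m` times the
Laplacian of the complete graph on `n` vertices sends `w` to `v` with `v i = m * (n * w i - ∑ w)`.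
So the coordinates of `v` are divisible by `m` and their differences by `m * n`, and on vectors of
sum zero these conditions characterize the image. One coordinate mod `m` together with `n - 2`
differences mod `m * n` therefore identify the quotient with `(R / (m * n))^(n - 2) × R / (m)`.
-/

/-- The submodule of `ι → R` of vectors whose coordinates sum to zero: the kernel of the degree
map, in which the image of an intersection matrix lies. -/
def sumZeroSubmodule (R ι : Type*) [Semiring R] [Fintype ι] : Submodule R (ι → R) :=
  LinearMap.ker (∑ i, LinearMap.proj i : (ι → R) →ₗ[R] R)

theorem mem_sumZeroSubmodule {R ι : Type*} [Semiring R] [Fintype ι] {v : ι → R} :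
    v ∈ sumZeroSubmodule R ι ↔ ∑ i, v i = 0 := by
  simp [sumZeroSubmodule]

theorem eq_of_sum_eq_of_forall_ne {ι M : Type*} [Fintype ι] [AddCommMonoid M]
    [IsRightCancelAdd M] {f g : ι → M} {b : ι} (hsum : ∑ i, f i = ∑ i, g i)
    (hne : ∀ i, i ≠ b → f i = g i) : f = g := by
  classical
  have at_b : f b = g b := by
    rwa [← Finset.add_sum_erase _ f (Finset.mem_univ b),
      ← Finset.add_sum_erase _ g (Finset.mem_univ b),
      Finset.sum_congr rfl fun i hi ↦ hne i (Finset.ne_of_mem_erase hi), add_left_inj] at hsum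
  funext i
  obtain rfl | hi := eq_or_ne i b
  exacts [at_b, hne i hi]

section Laplacian

open Matrix

variable {R V : Type*} [CommRing R] [Fintype V] [DecidableEq V]

theorem sum_lapMatrix_mulVec (G : SimpleGraph V) [DecidableRel G.Adj] (w : V → R) :
    ∑ i, (G.lapMatrix R *ᵥ w) i = 0 := by
  calc ∑ i, (G.lapMatrix R *ᵥ w) i
      = (fun _ ↦ 1) ⬝ᵥ (G.lapMatrix R *ᵥ w) := by simp [dotProduct]
    _ = (G.lapMatrix R *ᵥ fun _ ↦ 1) ⬝ᵥ w := by
      rw [dotProduct_mulVec, ← mulVec_transpose, (G.isSymm_lapMatrix R).eq]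
    _ = 0 := by rw [G.lapMatrix_mulVec_const_eq_zero, zero_dotProduct]

theorem range_toLin'_smul_lapMatrix_le_sumZeroSubmodule (G : SimpleGraph V) [DecidableRel G.Adj]
    (m : R) : LinearMap.range (toLin' (m • G.lapMatrix R)) ≤ sumZeroSubmodule R V := by
  rintro _ ⟨w, rfl⟩
  simp [mem_sumZeroSubmodule, ← Finset.mul_sum, sum_lapMatrix_mulVec]

theorem lapMatrix_top_mulVec_apply (w : V → R) (i : V) :
    ((⊤ : SimpleGraph V).lapMatrix R *ᵥ w) i = Fintype.card V * w i - ∑ j, w j := by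
  have degree_add_one : ((⊤ : SimpleGraph V).degree i : R) + 1 = Fintype.card V := by
    have card_pos : 0 < Fintype.card V := Fintype.card_pos_iff.mpr ⟨i⟩
    rw [SimpleGraph.complete_graph_degree, ← Nat.cast_add_one, Nat.sub_add_cancel card_pos]
  rw [SimpleGraph.lapMatrix_mulVec_apply, SimpleGraph.neighborFinset_top, ← degree_add_one,
    ← Finset.add_sum_erase _ w (Finset.mem_univ i), Finset.compl_singleton]
  ring

theorem toLin'_smul_lapMatrix_top_apply (m : R) (w : V → R) (i : V) :
    toLin' (m • (⊤ : SimpleGraph V).lapMatrix R) w i =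
      m * (Fintype.card V * w i - ∑ j, w j) := by
  simp [lapMatrix_top_mulVec_apply]

theorem mem_range_toLin'_smul_lapMatrix_top_iff (m : R) {v : V → R}
    (hv : v ∈ sumZeroSubmodule R V) (a b : V) :
    v ∈ LinearMap.range (toLin' (m • (⊤ : SimpleGraph V).lapMatrix R)) ↔
      (∀ i, i ≠ b → m * Fintype.card V ∣ v i - v a) ∧ m ∣ v a := by
  constructor
  · rintro ⟨w, rfl⟩
    simp only [toLin'_smul_lapMatrix_top_apply]
    exact ⟨fun i _ ↦ ⟨w i - w a, by ring⟩, dvd_mul_right _ _⟩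
  · rintro ⟨hdiff, y, hy⟩
    choose! d hd using hdiff
    -- Solve `v i - v a = m * card V * w i` subject to `∑ i, w i = -y`; the sum fixes `w b`.
    let w : V → R := Function.update d b (-y - ∑ i ∈ Finset.univ.erase b, d i)
    have w_of_ne {i : V} (hi : i ≠ b) : w i = d i := Function.update_of_ne hi _ _
    have sum_w : ∑ i, w i = -y := by
      rw [← Finset.add_sum_erase _ w (Finset.mem_univ b),
        Finset.sum_congr rfl fun i hi ↦ w_of_ne (Finset.ne_of_mem_erase hi)]
      simp [w]
    have sum_diff : ∑ i, (v i - v a) = ∑ i, m * Fintype.card V * w i := by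
      rw [Finset.sum_sub_distrib, mem_sumZeroSubmodule.mp hv, ← Finset.mul_sum, sum_w, hy]
      simp only [Finset.sum_const, Finset.card_univ, nsmul_eq_mul]
      ring
    have diff : (fun i ↦ v i - v a) = fun i ↦ m * Fintype.card V * w i :=
      eq_of_sum_eq_of_forall_ne sum_diff fun i hi ↦ by rw [hd i hi, w_of_ne hi]
    refine ⟨w, funext fun i ↦ ?_⟩
    rw [toLin'_smul_lapMatrix_top_apply, sum_w]
    linear_combination -congrFun diff i - hy

end Laplacian

section ComponentGroup

open Ideal (span)

variable {R : Type*} [CommRing R] (k : ℕ) (m : R)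

/-- The map `v ↦ ((v i - v 0)_{i ≥ 2} mod m * (k + 2), v 0 mod m)` on vectors of sum zero, whose
kernel is the image of `m` times the Laplacian of the complete graph on `k + 2` vertices.
Coordinate `1` is left out, being determined by the others. -/
def componentMap :
    sumZeroSubmodule R (Fin (k + 2)) →ₗ[R]
      (Fin k → R ⧸ span {m * (k + 2)}) × (R ⧸ span {m}) :=
  let coord (i : Fin (k + 2)) : (Fin (k + 2) → R) →ₗ[R] R := LinearMap.proj i
  (LinearMap.pi fun i ↦ (span {m * (k + 2)}).mkQ ∘ₗ (coord i.succ.succ - coord 0)).prod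
    ((span {m}).mkQ ∘ₗ coord 0) ∘ₗ (sumZeroSubmodule R (Fin (k + 2))).subtype

theorem componentMap_apply (v : sumZeroSubmodule R (Fin (k + 2))) :
    componentMap k m v =
      (fun i ↦ Ideal.Quotient.mk _ (v.1 i.succ.succ - v.1 0), Ideal.Quotient.mk _ (v.1 0)) :=
  rfl

theorem componentMap_surjective : Function.Surjective (componentMap k m) := by
  rintro ⟨c, y⟩
  obtain ⟨y, rfl⟩ := Ideal.Quotient.mk_surjective y
  choose d hd using fun i ↦ Ideal.Quotient.mk_surjective (c i)
  let v : Fin (k + 2) → R := Fin.cons y (Fin.cons (-(y + ∑ i, (d i + y))) fun i ↦ d i + y)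
  have hv : v ∈ sumZeroSubmodule R (Fin (k + 2)) := by
    simp only [mem_sumZeroSubmodule, v, Fin.sum_cons]
    ring
  exact ⟨⟨v, hv⟩, by simp [componentMap_apply, v, hd]⟩

theorem ker_componentMap :
    LinearMap.ker (componentMap k m) =
      (LinearMap.range (Matrix.toLin' (m • (⊤ : SimpleGraph (Fin (k + 2))).lapMatrix R))).comap
        (sumZeroSubmodule R (Fin (k + 2))).subtype := by
  ext v
  rw [Submodule.mem_comap, Submodule.subtype_apply,
    mem_range_toLin'_smul_lapMatrix_top_iff m v.2 0 1]
  simp [componentMap_apply, -map_sub, funext_iff, Ideal.Quotient.eq_zero_iff_dvd,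
    Fin.forall_fin_succ, Fin.succ_succ_ne_one]

end ComponentGroup

theorem quotient_by_genus4_intersection_matrix_general {R : Type*} [CommRing R] (k : ℕ) (m : R) :
    LinearMap.range (Matrix.toLin' (m • (⊤ : SimpleGraph (Fin (k + 2))).lapMatrix R)) ≤
        sumZeroSubmodule R (Fin (k + 2)) ∧
      Nonempty ((sumZeroSubmodule R (Fin (k + 2)) ⧸
        (LinearMap.range
          (Matrix.toLin' (m • (⊤ : SimpleGraph (Fin (k + 2))).lapMatrix R))).comap
            (sumZeroSubmodule R (Fin (k + 2))).subtype) ≃ₗ[R]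
        (Fin k → R ⧸ Ideal.span {m * (k + 2)}) × (R ⧸ Ideal.span {m})) :=
  ⟨range_toLin'_smul_lapMatrix_le_sumZeroSubmodule _ m,
    ⟨Submodule.quotEquivOfEq _ _ (ker_componentMap k m).symm ≪≫ₗ
      (componentMap k m).quotKerEquivOfSurjective (componentMap_surjective k m)⟩⟩

theorem sumZeroSubmodule3_eq_sumZeroSubmodule :
    sumZeroSubmodule3 = sumZeroSubmodule ℤ (Fin 3) := by
  ext v
  rw [mem_sumZeroSubmodule, Fin.sum_univ_three]
  rfl

theorem intersectionMatrix_eq_neg_two_smul_lapMatrix_top :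
    !![(-4 : ℤ), 2, 2; 2, -4, 2; 2, 2, -4] =
      (-2 : ℤ) • (⊤ : SimpleGraph (Fin 3)).lapMatrix ℤ := by
  decide

/-- Let `A : ℤ³ → ℤ³` be the linear map with matrix
`[[−4, 2, 2], [2, −4, 2], [2, 2, −4]]` and let `S = {(a, b, c) ∈ ℤ³ : a + b + c = 0}`.
Then the image of `A` is contained in `S`, and the quotient `S / A(ℤ³)` is isomorphic to
`ℤ/6ℤ × ℤ/2ℤ`. -/
theorem quotient_by_genus4_intersection_matrix :
    LinearMap.range
        (Matrix.toLin' !![(-4 : ℤ), 2, 2; 2, -4, 2; 2, 2, -4]) ≤ sumZeroSubmodule3 ∧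
      Nonempty ((sumZeroSubmodule3 ⧸
        (LinearMap.range
          (Matrix.toLin' !![(-4 : ℤ), 2, 2; 2, -4, 2; 2, 2, -4])).comap
            sumZeroSubmodule3.subtype) ≃+ ZMod 6 × ZMod 2) := by
  rw [sumZeroSubmodule3_eq_sumZeroSubmodule, intersectionMatrix_eq_neg_two_smul_lapMatrix_top]
  -- `Int.natAbs` makes the generators `-6` and `-2` into the moduli `6` and `2` by definition.
  exact (quotient_by_genus4_intersection_matrix_general 1 (-2 : ℤ)).imp_right <| Nonempty.map
    fun e ↦ e.toAddEquiv.trans <| AddEquiv.prodCongr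
      ((LinearEquiv.funUnique (Fin 1) ℤ _).toAddEquiv.trans
        (Int.quotientSpanEquivZMod (-2 * ((1 : ℕ) + 2))).toAddEquiv)
      (Int.quotientSpanEquivZMod (-2)).toAddEquiv
end

section
/- Let K be an algebraically closed field of characteristic different from 2, and let i ∈ K satisfy i² = −1. Then the set of nonzero quadruples (x, y, z, w) ∈ K⁴ satisfying xy = zw, (x − y)(z − w)(z + w) = 0, and x + y = 0 is exactly the set of nonzero scalar multiples of the six points (0,0,1,0), (0,0,0,1), (i,−i,1,1), (−i,i,1,1), (−1,1,−1,1), (1,−1,−1,1). -/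
/-!
On the hyperplane `x + y = 0` the quadric `xy = zw` becomes `zw = -x²`. The planes `x = y`,
`z = w`, `z = -w`, whose union is the zero locus of the cubic, cut it respectively in `x = 0`,
`zw = 0`; in `x² = -w² = (iw)²`; and in `x² = w²`. The last two are the cases `t = 1`, `s = i`
and `t = -1`, `s = -1` of the intersection with the plane `z = tw`, where `s² = -t`.
-/

section HyperplaneSection

variable {R : Type*}

theorem eq_smul_vec4_iff {α : Type*} [SMul R α] {v : Fin 4 → α} {r : R} {a b c d : α} :
    v = r • ![a, b, c, d] ↔
      v 0 = r • a ∧ v 1 = r • b ∧ v 2 = r • c ∧ v 3 = r • d := by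
  simp [funext_iff, Fin.forall_fin_succ]

variable [CommRing R] [NoZeroDivisors R]

theorem quadric_inter_x_eq_y_inter_x_add_y_eq_zero_iff (h2 : (2 : R) ≠ 0) {v : Fin 4 → R} :
    (v 0 * v 1 = v 2 * v 3 ∧ v 0 = v 1 ∧ v 0 + v 1 = 0) ↔
      ∃ c : R, v = c • ![0, 0, 1, 0] ∨ v = c • ![0, 0, 0, 1] := by
  simp only [eq_smul_vec4_iff, smul_eq_mul, mul_zero, mul_one]
  constructor
  · rintro ⟨hquadric, hxy, hsum⟩
    have hy : v 1 = 0 := by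
      have : 2 * v 1 = 0 := by linear_combination hsum - hxy
      exact (mul_eq_zero.mp this).resolve_left h2
    have hx : v 0 = 0 := hxy.trans hy
    have hzw : v 2 * v 3 = 0 := by rw [← hquadric, hy, mul_zero]
    rcases mul_eq_zero.mp hzw with hz | hw
    · exact ⟨v 3, .inr ⟨hx, hy, hz, rfl⟩⟩
    · exact ⟨v 2, .inl ⟨hx, hy, rfl, hw⟩⟩
  · rintro ⟨c, ⟨hx, hy, hz, hw⟩ | ⟨hx, hy, hz, hw⟩⟩ <;> simp [hx, hy, hz, hw]

theorem quadric_inter_z_eq_mul_w_inter_x_add_y_eq_zero_iff {s t : R} (hs : s ^ 2 = -t)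
    {v : Fin 4 → R} :
    (v 0 * v 1 = v 2 * v 3 ∧ v 2 = t * v 3 ∧ v 0 + v 1 = 0) ↔
      ∃ c : R, v = c • ![s, -s, t, 1] ∨ v = c • ![-s, s, t, 1] := by
  simp only [eq_smul_vec4_iff, smul_eq_mul, mul_one]
  constructor
  · rintro ⟨hquadric, hz, hsum⟩
    have hy : v 1 = -v 0 := eq_neg_of_add_eq_zero_right hsum
    have hx_sq : v 0 ^ 2 = (v 3 * s) ^ 2 := by
      linear_combination v 0 * hsum - hquadric - v 3 * hz - v 3 ^ 2 * hs
    have hz' : v 2 = v 3 * t := hz.trans (mul_comm t (v 3))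
    rcases sq_eq_sq_iff_eq_or_eq_neg.mp hx_sq with hx | hx
    · exact ⟨v 3, .inl ⟨hx, by rw [hy, hx, mul_neg], hz', rfl⟩⟩
    · exact ⟨v 3, .inr ⟨by rw [hx, mul_neg], by rw [hy, hx, neg_neg], hz', rfl⟩⟩
  · rintro ⟨c, ⟨hx, hy, hz, hw⟩ | ⟨hx, hy, hz, hw⟩⟩ <;> rw [hx, hy, hz, hw] <;>
      exact ⟨by linear_combination -c ^ 2 * hs, by ring, by ring⟩

theorem hyperplane_section_XplusY_of_special_fiber_general (h2 : (2 : R) ≠ 0)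
    {i : R} (hi : i ^ 2 = -1) {v : Fin 4 → R} (hv : v ≠ 0) :
    (v 0 * v 1 = v 2 * v 3 ∧ (v 0 - v 1) * (v 2 - v 3) * (v 2 + v 3) = 0 ∧
        v 0 + v 1 = 0) ↔
      ∃ c : R, c ≠ 0 ∧
        (v = c • ![0, 0, 1, 0] ∨ v = c • ![0, 0, 0, 1] ∨
          v = c • ![i, -i, 1, 1] ∨ v = c • ![-i, i, 1, 1] ∨
          v = c • ![-1, 1, -1, 1] ∨ v = c • ![1, -1, -1, 1]) := by
  have hplane₁ := quadric_inter_x_eq_y_inter_x_add_y_eq_zero_iff h2 (v := v)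
  have hplane₂ := quadric_inter_z_eq_mul_w_inter_x_add_y_eq_zero_iff hi (v := v)
  have hplane₃ := quadric_inter_z_eq_mul_w_inter_x_add_y_eq_zero_iff
    (s := (-1 : R)) (t := -1) (by ring) (v := v)
  rw [one_mul] at hplane₂
  rw [neg_one_mul, neg_neg] at hplane₃
  have hcubic : (v 0 - v 1) * (v 2 - v 3) * (v 2 + v 3) = 0 ↔
      (v 0 = v 1 ∨ v 2 = v 3) ∨ v 2 = -v 3 := by
    rw [mul_eq_zero, mul_eq_zero, sub_eq_zero, sub_eq_zero, add_eq_zero_iff_eq_neg]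
  have hscalar : ∀ {c : R} {p : Fin 4 → R}, v = c • p → c ≠ 0 := by
    rintro c p h rfl
    exact hv (h.trans (zero_smul R p))
  rw [hcubic, or_and_right, or_and_right, and_or_left, and_or_left, hplane₁, hplane₂, hplane₃,
    ← exists_or, ← exists_or]
  refine exists_congr fun c => ?_
  simp only [or_assoc]
  exact (and_iff_right_of_imp (by rintro (h | h | h | h | h | h) <;> exact hscalar h)).symm

end HyperplaneSection

/-- Let `K` be an algebraically closed field of characteristic `≠ 2` and `i ∈ K` a square
root of `−1`.  The nonzero solutions `(x, y, z, w) ∈ K⁴` of `xy = zw`,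
`(x − y)(z − w)(z + w) = 0`, `x + y = 0` are exactly the nonzero scalar multiples of the
six points `(0,0,1,0)`, `(0,0,0,1)`, `(i,−i,1,1)`, `(−i,i,1,1)`, `(−1,1,−1,1)`,
`(1,−1,−1,1)`. -/
theorem hyperplane_section_XplusY_of_special_fiber
    (K : Type*) [Field K] [IsAlgClosed K] (hchar : ringChar K ≠ 2)
    (i : K) (hi : i ^ 2 = -1) :
    ∀ v : Fin 4 → K, v ≠ 0 →
      ((v 0 * v 1 = v 2 * v 3 ∧ (v 0 - v 1) * (v 2 - v 3) * (v 2 + v 3) = 0 ∧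
          v 0 + v 1 = 0) ↔
        ∃ c : K, c ≠ 0 ∧
          (v = c • ![0, 0, 1, 0] ∨ v = c • ![0, 0, 0, 1] ∨
            v = c • ![i, -i, 1, 1] ∨ v = c • ![-i, i, 1, 1] ∨
            v = c • ![-1, 1, -1, 1] ∨ v = c • ![1, -1, -1, 1])) := fun _ hv =>
  hyperplane_section_XplusY_of_special_fiber_general (Ring.two_ne_zero hchar) hi hv
end
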